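/- Let d ≥ 1 and let S ⊆ ℝ^d be the vertex set of a d-simplex inscribed in the unit sphere, i.e., S consists of d + 1 affinely independent points of Euclidean norm 1, and suppose the simplex is not regular (not all pairwise distances between points of S are equal). Then there exists an ellipsoid E ⊆ ℝ^d containing S whose Lebesgue measure is strictly smaller than that of the closed unit ball; in particular the minimum-volume enclosing ellipsoid of S is not the closed unit ball. -/

import Mathlib

open MeasureTheory Metric Set

noncomputable section

/-- `Euc n` is the Euclidean space `ℝⁿ`. -/
abbrev Euc (n : ℕ) : Type := EuclideanSpace ℝ (Fin n)

/-- A state space of linear dimension `ℓ`: a compact convex set contained in (and affinely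
spanning) an affine hyperplane not through the origin, here written as `{x | f x = 1}`
for a nonzero linear functional `f`. -/
def IsStateSpace {ℓ : ℕ} (𝕊 : Set (Euc ℓ)) : Prop :=
  IsCompact 𝕊 ∧ Convex ℝ 𝕊 ∧
    ∃ f : Euc ℓ →ₗ[ℝ] ℝ, f ≠ 0 ∧
      (affineSpan ℝ 𝕊 : Set (Euc ℓ)) = {x | f x = 1}

/-- `R` is admissible for the data set `X` (w.r.t. the state space `𝕊`): it is the image of `𝕊`
under some linear map and satisfies `X ⊆ R ⊆ aff X`. -/
def Admissible {ℓ n : ℕ} (𝕊 : Set (Euc ℓ)) (X R : Set (Euc n)) : Prop :=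
  (∃ M : Euc ℓ →ₗ[ℝ] Euc n, R = M '' 𝕊) ∧ X ⊆ R ∧ R ⊆ (affineSpan ℝ X : Set (Euc n))

/-- Data-driven inference: the admissible sets for `X` of minimal `d`-dimensional Hausdorff
measure, where `d = dim aff X`. -/
def ddi {ℓ n : ℕ} (X : Set (Euc n)) (𝕊 : Set (Euc ℓ)) : Set (Set (Euc n)) :=
  {R | Admissible 𝕊 X R ∧ ∀ R' : Set (Euc n), Admissible 𝕊 X R' →
      μH[(Module.finrank ℝ (affineSpan ℝ X).direction : ℝ)] R ≤
        μH[(Module.finrank ℝ (affineSpan ℝ X).direction : ℝ)] R'}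

/-- A (hyper)-ellipsoid state space in `ℝ^ℓ`: the image of the closed unit ball of `ℝ^(ℓ-1)`
under an injective affine map. -/
def IsHyperEllipsoid {ℓ : ℕ} (𝕊 : Set (Euc ℓ)) : Prop :=
  ∃ F : Euc (ℓ - 1) →ᵃ[ℝ] Euc ℓ, Function.Injective F ∧ 𝕊 = F '' closedBall 0 1

/-- An ellipsoid in `ℝ^d`: the image of the closed unit ball under an invertible affine
transformation. -/
def IsEllipsoid {d : ℕ} (E : Set (Euc d)) : Prop :=
  ∃ F : Euc d ≃ᵃ[ℝ] Euc d, E = F '' closedBall 0 1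

/-!
A regular simplex centred at the origin is, up to scaling, a Parseval frame `u`, so that
`∑ i, ‖L (u i)‖ ^ 2 = tr (L† L)` for every linear map `L`. Let `p i` be the vertices of a simplex
with centroid `g`, let `r` be the common norm of the `u i`, and choose `L` with
`L (u i) = r • (p i - g)`. Then `p i = g + L (r⁻¹ • u i)` lies in the ellipsoid `g + L (ball)`.
If `p` is inscribed in the unit sphere, then `∑ i, ‖p i - g‖ ^ 2 ≤ d + 1` because the centroid
minimises the sum of squared distances, hence `tr (L† L) ≤ r ^ 2 * (d + 1) = d`. By the inequality
of arithmetic and geometric means for the eigenvalues of `L† L`, `|det L| ≤ 1`, with equality only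
if `L† L = 1`; in that case `L` is an isometry and the simplex `p` is regular.
-/

open Affine Module
open scoped InnerProductSpace

theorem prod_lt_one_of_sum_le_card {ι : Type*} {s : Finset ι} {x : ι → ℝ}
    (hx : ∀ i ∈ s, 0 ≤ x i) (hsum : ∑ i ∈ s, x i ≤ s.card) (hne : ∃ i ∈ s, x i ≠ 1) :
    ∏ i ∈ s, x i < 1 := by
  by_cases hpos : ∀ i ∈ s, 0 < x i
  · obtain ⟨j, hj, hxj⟩ := hne
    calc ∏ i ∈ s, x i < ∏ i ∈ s, Real.exp (x i - 1) :=
          Finset.prod_lt_prod hpos (fun i _ ↦ by linarith [Real.add_one_le_exp (x i - 1)])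
            ⟨j, hj, by linarith [Real.add_one_lt_exp (sub_ne_zero.mpr hxj)]⟩
      _ = Real.exp (∑ i ∈ s, x i - s.card) := by simp [← Real.exp_sum]
      _ ≤ 1 := Real.exp_le_one_iff.mpr (sub_nonpos.mpr hsum)
  · push Not at hpos
    obtain ⟨j, hj, hxj⟩ := hpos
    simp [Finset.prod_eq_zero hj (hxj.antisymm (hx j hj))]

theorem sum_norm_sq_le_sum_norm_add_sq {ι E : Type*} [Fintype ι] [NormedAddCommGroup E]
    [InnerProductSpace ℝ E] {x : ι → E} (hx : ∑ i, x i = 0) (c : E) :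
    ∑ i, ‖x i‖ ^ 2 ≤ ∑ i, ‖x i + c‖ ^ 2 := by
  have hcross : ∑ i, 2 * ⟪x i, c⟫_ℝ = 0 := by
    rw [← Finset.mul_sum, ← sum_inner, hx, inner_zero_left, mul_zero]
  simp only [norm_add_sq_real, Finset.sum_add_distrib, hcross, add_zero]
  exact le_add_of_nonneg_right (by positivity)

theorem surjective_of_affineSpan_eq_top_of_subset_range {k V P W Q : Type*} [Ring k]
    [AddCommGroup V] [Module k V] [AddTorsor V P] [AddCommGroup W] [Module k W] [AddTorsor W Q]
    {f : P →ᵃ[k] Q} {t : Set Q} (ht : affineSpan k t = ⊤) (hsub : t ⊆ range f) :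
    Function.Surjective f := by
  have htop : (⊤ : AffineSubspace k P).map f = ⊤ :=
    top_unique (ht ▸ affineSpan_le.mpr (by simpa using hsub))
  simpa [← range_eq_univ] using congrArg SetLike.coe htop

theorem addHaar_image_affineMap {E : Type*} [NormedAddCommGroup E] [NormedSpace ℝ E]
    [FiniteDimensional ℝ E] [MeasurableSpace E] [BorelSpace E] (μ : Measure E)
    [μ.IsAddHaarMeasure] (f : E →ᵃ[ℝ] E) (s : Set E) :
    μ (f '' s) = ENNReal.ofReal |LinearMap.det f.linear| * μ s := by
  have himage : f '' s = (f 0 + ·) '' (f.linear '' s) := by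
    rw [image_image]
    exact image_congr fun x _ ↦ by rw [f.decomp', add_comm]; simp
  rw [himage, image_add_left, measure_preimage_add, Measure.addHaar_image_linearMap]

section Linear

variable {𝕜 E F : Type*} [RCLike 𝕜] [NormedAddCommGroup E] [InnerProductSpace 𝕜 E]
  [FiniteDimensional 𝕜 E] [NormedAddCommGroup F] [InnerProductSpace 𝕜 F]
  [FiniteDimensional 𝕜 F]

theorem eq_one_of_eigenvalues_eq_one {T : E →ₗ[𝕜] E} (hT : T.IsSymmetric)
    {n : ℕ} (hn : finrank 𝕜 E = n) (h : ∀ i, hT.eigenvalues hn i = 1) : T = 1 := by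
  refine (hT.eigenvectorBasis hn).toBasis.ext fun i ↦ ?_
  simp [h]

theorem normDet_lt_one_of_re_trace_le {L : E →ₗ[𝕜] F}
    (htr : RCLike.re ((L.adjoint ∘ₗ L).trace 𝕜 E) ≤ finrank 𝕜 E) (hne : L.adjoint ∘ₗ L ≠ 1) :
    L.normDet < 1 := by
  have hpos := L.isPositive_adjoint_comp_self
  have hdet : L.normDet ^ 2 = ∏ i, hpos.isSymmetric.eigenvalues rfl i := by
    rw [← RCLike.ofReal_inj (K := 𝕜), L.normDet_sq,
      hpos.isSymmetric.det_eq_prod_eigenvalues rfl, RCLike.ofReal_prod]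
  have hne' : ∃ i ∈ Finset.univ, hpos.isSymmetric.eigenvalues rfl i ≠ 1 := by
    by_contra! h
    exact hne (eq_one_of_eigenvalues_eq_one hpos.isSymmetric rfl fun i ↦ h i (Finset.mem_univ i))
  rw [hpos.isSymmetric.re_trace_eq_sum_eigenvalues rfl] at htr
  rw [← sq_lt_one_iff₀ L.normDet_nonneg, hdet]
  exact prod_lt_one_of_sum_le_card (fun i _ ↦ hpos.nonneg_eigenvalues rfl i) (by simpa using htr)
    hne'

theorem trace_eq_sum_inner_of_parseval {ι : Type*} [Fintype ι] {u : ι → E}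
    (hu : ∀ x, ∑ i, ⟪u i, x⟫_𝕜 • u i = x) (A : E →ₗ[𝕜] E) :
    A.trace 𝕜 E = ∑ i, ⟪u i, A (u i)⟫_𝕜 := by
  have hA : A = ∑ i, ((InnerProductSpace.rankOne 𝕜 (A (u i)) (u i) : E →L[𝕜] E) : E →ₗ[𝕜] E) := by
    ext x
    conv_lhs => rw [← hu x]
    simp
  conv_lhs => rw [hA]
  simp [InnerProductSpace.trace_rankOne]

theorem trace_adjoint_comp_self_eq_sum_norm_sq {ι : Type*} [Fintype ι] {u : ι → E}
    (hu : ∀ x, ∑ i, ⟪u i, x⟫_𝕜 • u i = x) (L : E →ₗ[𝕜] F) :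
    (L.adjoint ∘ₗ L).trace 𝕜 E = ((∑ i, ‖L (u i)‖ ^ 2 : ℝ) : 𝕜) := by
  rw [trace_eq_sum_inner_of_parseval hu]
  simp [LinearMap.adjoint_inner_right, inner_self_eq_norm_sq_to_K]

end Linear

/-- The vertices of a regular simplex centred at the origin, scaled to form a Parseval frame of `E`;
up to a linear isometry, the orthogonal projections of the standard basis of `𝕜^ι` to the
hyperplane of vectors with coordinate sum zero. They are the reference vertices from which an
arbitrary simplex is obtained by an affine map. -/
structure IsSimplexFrame (𝕜 : Type*) {ι E : Type*} [RCLike 𝕜] [Fintype ι] [DecidableEq ι]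
    [NormedAddCommGroup E] [InnerProductSpace 𝕜 E] (u : ι → E) : Prop where
  inner_eq (i j : ι) : ⟪u i, u j⟫_𝕜 = (if i = j then 1 else 0) - (Fintype.card ι : 𝕜)⁻¹
  sum_inner_smul (x : E) : ∑ i, ⟪u i, x⟫_𝕜 • u i = x

theorem isSimplexFrame_orthogonalProjectionOnto (𝕜 ι : Type*) [RCLike 𝕜] [Fintype ι]
    [DecidableEq ι] :
    IsSimplexFrame 𝕜 fun i ↦ (𝕜 ∙ (WithLp.toLp 2 1 : EuclideanSpace 𝕜 ι))ᗮ.orthogonalProjectionOnto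
      (EuclideanSpace.basisFun ι 𝕜 i) where
  inner_eq i j := by
    rw [Submodule.inner_orthogonalProjectionOnto_eq_of_mem_left,
      ← Submodule.starProjection_apply, Submodule.starProjection_orthogonal]
    simp [Submodule.starProjection_singleton, EuclideanSpace.norm_sq_eq, PiLp.inner_apply,
      eq_comm (a := j)]
  sum_inner_smul x := by
    simp only [Submodule.inner_orthogonalProjectionOnto_eq_of_mem_right, ← map_smul, ← map_sum,
      (EuclideanSpace.basisFun ι 𝕜).sum_repr']
    simp

namespace IsSimplexFrame

variable {𝕜 ι E V : Type*} [RCLike 𝕜] [Fintype ι] [DecidableEq ι] [NormedAddCommGroup E]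
  [InnerProductSpace 𝕜 E] {u : ι → E}

theorem map {F : Type*} [NormedAddCommGroup F] [InnerProductSpace 𝕜 F] (hu : IsSimplexFrame 𝕜 u)
    (e : E ≃ₗᵢ[𝕜] F) : IsSimplexFrame 𝕜 (e ∘ u) where
  inner_eq i j := by simp [hu.inner_eq]
  sum_inner_smul x := e.symm.injective <| by
    simp [LinearIsometryEquiv.inner_map_eq_flip, hu.sum_inner_smul]

theorem exists_of_finrank_add_one_eq_card [FiniteDimensional 𝕜 E]
    (hcard : finrank 𝕜 E + 1 = Fintype.card ι) : ∃ u : ι → E, IsSimplexFrame 𝕜 u := by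
  have : Nonempty ι := Fintype.card_pos_iff.mp (by lia)
  have : Fact (finrank 𝕜 (EuclideanSpace 𝕜 ι) = finrank 𝕜 E + 1) := ⟨by simp [hcard]⟩
  have hones : (WithLp.toLp 2 1 : EuclideanSpace 𝕜 ι) ≠ 0 := by simp
  exact ⟨_, (isSimplexFrame_orthogonalProjectionOnto 𝕜 ι).map <|
    (OrthonormalBasis.fromOrthogonalSpanSingleton _ hones).equiv (stdOrthonormalBasis 𝕜 E)
      (Equiv.refl _)⟩

theorem exists_linearMap_apply_eq [AddCommGroup V] [Module 𝕜 V] (hu : IsSimplexFrame 𝕜 u)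
    {v : ι → V} (hv : ∑ i, v i = 0) : ∃ T : E →ₗ[𝕜] V, ∀ i, T (u i) = v i :=
  ⟨∑ i, (innerₛₗ 𝕜 (u i)).smulRight (v i), fun i ↦ by
    simp [hu.inner_eq, sub_smul, ← Finset.smul_sum, hv]⟩

theorem norm_sq_eq (hu : IsSimplexFrame 𝕜 u) (i : ι) :
    ‖u i‖ ^ 2 = 1 - (Fintype.card ι : ℝ)⁻¹ := by
  rw [← RCLike.ofReal_inj (K := 𝕜)]
  push_cast
  rw [← inner_self_eq_norm_sq_to_K, hu.inner_eq, if_pos rfl]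

theorem dist_eq (hu : IsSimplexFrame 𝕜 u) {i j : ι} (hij : i ≠ j) :
    dist (u i) (u j) = √2 := by
  have hinner : ⟪u i - u j, u i - u j⟫_𝕜 = 2 := by
    simp only [inner_sub_left, inner_sub_right, hu.inner_eq, if_true, if_neg hij, if_neg hij.symm]
    ring
  rw [dist_eq_norm, norm_eq_sqrt_re_inner (𝕜 := 𝕜), hinner, RCLike.ofNat_re]

theorem normDet_lt_one {F : Type*} [NormedAddCommGroup F] [InnerProductSpace 𝕜 F]
    [FiniteDimensional 𝕜 E] [FiniteDimensional 𝕜 F]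
    (hu : IsSimplexFrame 𝕜 u) {L : E →ₗ[𝕜] F}
    (hL : ∑ i, ‖L (u i)‖ ^ 2 ≤ finrank 𝕜 E) {i j : ι} (hij : i ≠ j)
    (hdist : dist (L (u i)) (L (u j)) ≠ √2) : L.normDet < 1 := by
  refine normDet_lt_one_of_re_trace_le ?_ fun hadj ↦ hdist ?_
  · rwa [trace_adjoint_comp_self_eq_sum_norm_sq hu.sum_inner_smul, RCLike.ofReal_re]
  · have hisom (x : E) : ‖L x‖ = ‖x‖ := by
      rw [norm_eq_sqrt_re_inner (𝕜 := 𝕜), ← LinearMap.adjoint_inner_right, ← LinearMap.comp_apply,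
        hadj, Module.End.one_apply, ← norm_eq_sqrt_re_inner]
    rw [dist_eq_norm, ← map_sub, hisom, ← dist_eq_norm, hu.dist_eq hij]

end IsSimplexFrame

section Real

variable {ι E : Type*} [Fintype ι] [NormedAddCommGroup E] [InnerProductSpace ℝ E]
  [FiniteDimensional ℝ E]

theorem exists_linearMap_abs_det_lt_one (hcard : finrank ℝ E + 1 = Fintype.card ι) {x : ι → E}
    (hx : ¬ ∃ δ, ∀ i j, i ≠ j → dist (x i) (x j) = δ) (hsum : ∑ i, x i = 0)
    (hsq : ∑ i, ‖x i‖ ^ 2 ≤ Fintype.card ι) :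
    ∃ L : E →ₗ[ℝ] E, range x ⊆ L '' closedBall 0 1 ∧ |LinearMap.det L| < 1 := by
  classical
  obtain ⟨u, hu⟩ := IsSimplexFrame.exists_of_finrank_add_one_eq_card hcard
  let r := √(1 - (Fintype.card ι : ℝ)⁻¹)
  obtain ⟨i, j, hij, hdist⟩ : ∃ i j, i ≠ j ∧ dist (x i) (x j) ≠ √2 / r := by
    by_contra! h
    exact hx ⟨_, h⟩
  have hcard_gt : (1 : ℝ) < Fintype.card ι := mod_cast Fintype.one_lt_card_iff.mpr ⟨i, j, hij⟩
  have hr : 0 < r := Real.sqrt_pos.mpr (sub_pos.mpr (inv_lt_one_of_one_lt₀ hcard_gt))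
  have hr_sq : r ^ 2 = 1 - (Fintype.card ι : ℝ)⁻¹ := Real.sq_sqrt (Real.sqrt_pos.mp hr).le
  have hnorm (k : ι) : ‖u k‖ = r := by
    rw [← sq_eq_sq₀ (norm_nonneg _) hr.le, hu.norm_sq_eq, hr_sq]
  obtain ⟨L, hL⟩ := hu.exists_linearMap_apply_eq (v := fun i ↦ r • x i)
    (by rw [← Finset.smul_sum, hsum, smul_zero])
  have hLsum : ∑ i, ‖L (u i)‖ ^ 2 ≤ finrank ℝ E :=
    calc ∑ i, ‖L (u i)‖ ^ 2 = r ^ 2 * ∑ i, ‖x i‖ ^ 2 := by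
          simp [hL, norm_smul, mul_pow, Finset.mul_sum]
      _ ≤ r ^ 2 * Fintype.card ι := by gcongr
      _ = finrank ℝ E := by
          rw [hr_sq, sub_mul, inv_mul_cancel₀ (by positivity), ← hcard]
          push_cast
          ring
  have hLdist : dist (L (u i)) (L (u j)) ≠ √2 := by
    rw [hL, hL, dist_smul₀, Real.norm_of_nonneg hr.le]
    rwa [ne_eq, mul_comm, ← eq_div_iff hr.ne']
  refine ⟨L, ?_, by simpa [L.normDet_eq_abs_det] using hu.normDet_lt_one hLsum hij hLdist⟩
  rintro _ ⟨k, rfl⟩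
  exact ⟨r⁻¹ • u k, by simp [norm_smul, hnorm, abs_of_pos hr, hr.ne'], by simp [hL, hr.ne']⟩

theorem exists_affineMap_abs_det_lt_one (hcard : finrank ℝ E + 1 = Fintype.card ι) {p : ι → E}
    (hp : ¬ ∃ δ, ∀ i j, i ≠ j → dist (p i) (p j) = δ) {c : E}
    (hc : ∑ i, dist (p i) c ^ 2 ≤ Fintype.card ι) :
    ∃ f : E →ᵃ[ℝ] E, range p ⊆ f '' closedBall 0 1 ∧ |LinearMap.det f.linear| < 1 := by
  let g := (Fintype.card ι : ℝ)⁻¹ • ∑ i, p i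
  have hcard_ne : (Fintype.card ι : ℝ) ≠ 0 := by
    rw [← hcard]
    positivity
  have hsum : ∑ i, (p i - g) = 0 := by
    simp [g, smul_smul, ← Nat.cast_smul_eq_nsmul ℝ, hcard_ne]
  have hsq : ∑ i, ‖p i - g‖ ^ 2 ≤ Fintype.card ι :=
    (sum_norm_sq_le_sum_norm_add_sq hsum (g - c)).trans (by simpa [dist_eq_norm] using hc)
  obtain ⟨L, hL, hdet⟩ := exists_linearMap_abs_det_lt_one hcard (by simpa using hp) hsum hsq
  refine ⟨L.toAffineMap + AffineMap.const ℝ E g, ?_, by simpa using hdet⟩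
  rintro _ ⟨i, rfl⟩
  obtain ⟨y, hy, hLy⟩ := hL (mem_range_self i)
  exact ⟨y, hy, by simp [hLy]⟩

end Real

theorem stmt_10_general {d : ℕ} {s : Simplex ℝ (Euc d) d} (hs : ¬ s.Equilateral) {c : Euc d}
    (hc : ∑ i, dist (s.points i) c ^ 2 ≤ d + 1) :
    ∃ E : Set (Euc d), IsEllipsoid E ∧ range s.points ⊆ E ∧
      volume E < volume (closedBall (0 : Euc d) 1) := by
  obtain ⟨f, hsub, hdet⟩ := exists_affineMap_abs_det_lt_one (by simp) hs (by simpa using hc)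
  have hsurj : Function.Surjective f.linear := f.linear_surjective_iff.mpr <|
    surjective_of_affineSpan_eq_top_of_subset_range (s.span_eq_top (by simp))
      (hsub.trans (image_subset_range f _))
  have hbij : Function.Bijective f :=
    f.linear_bijective_iff.mp ⟨LinearMap.injective_iff_surjective.mpr hsurj, hsurj⟩
  refine ⟨f '' closedBall 0 1, ⟨AffineEquiv.ofBijective hbij, rfl⟩, hsub, ?_⟩
  calc volume (f '' closedBall 0 1)
      = ENNReal.ofReal |LinearMap.det f.linear| * volume (closedBall (0 : Euc d) 1) :=
        addHaar_image_affineMap _ _ _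
    _ < 1 * volume (closedBall (0 : Euc d) 1) :=
        ENNReal.mul_lt_mul_left (measure_closedBall_pos _ _ one_pos).ne'
          measure_closedBall_lt_top.ne (ENNReal.ofReal_lt_one.mpr hdet)
    _ = volume (closedBall (0 : Euc d) 1) := one_mul _

theorem stmt_10 {d : ℕ} (hd : 1 ≤ d) (v : Fin (d + 1) → Euc d)
    (hai : AffineIndependent ℝ v) (hnorm : ∀ i, ‖v i‖ = 1)
    (S : Set (Euc d)) (hS : S = Set.range v)
    (hirr : ¬ ∃ δ : ℝ, ∀ a ∈ S, ∀ b ∈ S, a ≠ b → dist a b = δ) :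
    ∃ E : Set (Euc d), IsEllipsoid E ∧ S ⊆ E ∧
      volume E < volume (closedBall (0 : Euc d) 1) := by
  subst hS
  refine stmt_10_general (s := ⟨v, hai⟩) (c := 0) (fun ⟨δ, hδ⟩ ↦ hirr ⟨δ, ?_⟩) (by simp [hnorm])
  rintro _ ⟨i, rfl⟩ _ ⟨j, rfl⟩ hij
  exact hδ i j (ne_of_apply_ne v hij)
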